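/- Let R ∈ ℂ(z)^{m×m} and define G ∈ ℂ(z)^{m×m} entrywise by G_{ij} := the substitution of (1 + z)/(1 − z) into R_{ij}. Then R is para-Hermitian if and only if G is *-even, i.e. G^* = G(−z), where G(−z) is the matrix obtained from G by entrywise substitution of −z for z. -/

import Mathlib

open Polynomial Matrix

set_option synthInstance.maxHeartbeats 1000000
set_option maxHeartbeats 1000000

noncomputable section

/-- Coefficientwise complex conjugation on rational functions. -/
def conjRF : RatFunc ℂ →+* RatFunc ℂ :=
  RatFunc.mapRingHom (Polynomial.mapRingHom (starRingEnd ℂ))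
    (by
      intro x hx
      simp only [Submonoid.mem_comap, mem_nonZeroDivisors_iff_ne_zero] at *
      intro h
      exact hx (Polynomial.map_injective _ (starRingEnd ℂ).injective (by simpa using h)))

/-- Substitution of `g` for the variable in `f`. -/
def subst (g f : RatFunc ℂ) : RatFunc ℂ := RatFunc.eval (algebraMap ℂ (RatFunc ℂ)) g f

/-- Constant complex matrices regarded as matrices over `ℂ(z)`. -/
def toRF {n o : Type*} (A : Matrix n o ℂ) : Matrix n o (RatFunc ℂ) :=
  A.map (algebraMap ℂ (RatFunc ℂ))

/-- The para-conjugate `R^*(1/z)`. -/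
def paraConj {n : Type*} (R : Matrix n n (RatFunc ℂ)) : Matrix n n (RatFunc ℂ) :=
  fun i j => subst (RatFunc.X)⁻¹ (conjRF (R j i))

def IsParaHermitian {n : Type*} (R : Matrix n n (RatFunc ℂ)) : Prop := paraConj R = R

def IsParaSkewHermitian {n : Type*} (R : Matrix n n (RatFunc ℂ)) : Prop := paraConj R = -R

/-- The variable `z` of `ℂ(z)`. -/
def zz : RatFunc ℂ := RatFunc.X

/-- Coefficientwise-conjugate transpose of a matrix over `ℂ(z)`. -/
def conjT {a b : Type*} (R : Matrix a b (RatFunc ℂ)) : Matrix b a (RatFunc ℂ) :=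
  fun i j => conjRF (R j i)

/-- Entrywise substitution of `g` into a matrix over `ℂ(z)`. -/
def substMat {a b : Type*} (g : RatFunc ℂ) (R : Matrix a b (RatFunc ℂ)) :
    Matrix a b (RatFunc ℂ) :=
  fun i j => subst g (R i j)

/-!
Write `c = (1 + z) / (1 - z)`. Substituting `c` intertwines the involutions `z ↦ z⁻¹` and `z ↦ -z`,
because `c(-z) = c⁻¹`, and it commutes with coefficient conjugation, because `c` has real
coefficients. So it carries `R^*(z⁻¹)` to `G^*(-z)`. As `c` is transcendental over `ℂ`, substituting
it is injective, whence `R^*(z⁻¹) = R` iff `G^*(-z) = G`, and the involution `z ↦ -z` moves to the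
other side.
-/

section LowestTerms

variable {K L : Type*} [Field K] [Field L]

theorem gcd_eq_one_of_isCoprime {A : Type*} [CommRing A] [IsDomain A] [IsBezout A]
    [NormalizedGCDMonoid A] {x y : A} (h : IsCoprime x y) : gcd x y = 1 := by
  rw [← normalize_gcd, normalize_eq_one]
  exact (gcd_isUnit_iff x y).mpr h

theorem num_div_eq_of_isCoprime {p q : K[X]} (hpq : IsCoprime p q) (hq : q.Monic) :
    RatFunc.num (algebraMap K[X] (RatFunc K) p / algebraMap K[X] (RatFunc K) q) = p := by
  classical
  rw [RatFunc.num_div, gcd_eq_one_of_isCoprime hpq]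
  simp [hq.leadingCoeff]

theorem denom_div_eq_of_isCoprime {p q : K[X]} (hpq : IsCoprime p q) (hq : q.Monic) :
    RatFunc.denom (algebraMap K[X] (RatFunc K) p / algebraMap K[X] (RatFunc K) q) = q := by
  classical
  rw [RatFunc.denom_div p hq.ne_zero, gcd_eq_one_of_isCoprime hpq]
  simp [hq.leadingCoeff]

variable (φ : K →+* L) (hφ : nonZeroDivisors K[X] ≤ (nonZeroDivisors L[X]).comap (mapRingHom φ))

theorem num_mapRingHom (f : RatFunc K) :
    (RatFunc.mapRingHom (mapRingHom φ) hφ f).num = f.num.map φ := by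
  rw [RatFunc.coe_mapRingHom_eq_coe_map, RatFunc.map_apply]
  exact num_div_eq_of_isCoprime (f.isCoprime_num_denom.map (mapRingHom φ)) (f.monic_denom.map φ)

theorem denom_mapRingHom (f : RatFunc K) :
    (RatFunc.mapRingHom (mapRingHom φ) hφ f).denom = f.denom.map φ := by
  rw [RatFunc.coe_mapRingHom_eq_coe_map, RatFunc.map_apply]
  exact denom_div_eq_of_isCoprime (f.isCoprime_num_denom.map (mapRingHom φ)) (f.monic_denom.map φ)

end LowestTerms

theorem conjRF_algebraMap (c : ℂ) :
    conjRF (algebraMap ℂ (RatFunc ℂ) c) = algebraMap ℂ (RatFunc ℂ) (starRingEnd ℂ c) := by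
  simp [conjRF, RatFunc.coe_mapRingHom_eq_coe_map, RatFunc.map_apply, RatFunc.algebraMap_eq_C]

theorem conjRF_zz : conjRF zz = zz := by
  simp [conjRF, zz, RatFunc.coe_mapRingHom_eq_coe_map, RatFunc.map_apply]

theorem conjRF_subst (g f : RatFunc ℂ) :
    conjRF (subst g f) = subst (conjRF g) (conjRF f) := by
  have conj_eval₂ (p : ℂ[X]) : conjRF (p.eval₂ (algebraMap ℂ (RatFunc ℂ)) g) =
      (p.map (starRingEnd ℂ)).eval₂ (algebraMap ℂ (RatFunc ℂ)) (conjRF g) := by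
    rw [hom_eval₂, eval₂_map]
    exact congrArg (fun ψ => p.eval₂ ψ (conjRF g)) (RingHom.ext conjRF_algebraMap)
  have num_conj : (conjRF f).num = f.num.map (starRingEnd ℂ) := num_mapRingHom _ _ f
  have denom_conj : (conjRF f).denom = f.denom.map (starRingEnd ℂ) := denom_mapRingHom _ _ f
  simp only [subst, RatFunc.eval, map_div₀, conj_eval₂, num_conj, denom_conj]

theorem subst_zz_right (g : RatFunc ℂ) : subst g zz = g :=
  RatFunc.eval_X _ _

theorem subst_zz_left (f : RatFunc ℂ) : subst zz f = f := by
  rw [subst, RatFunc.eval, zz, ← aeval_def, ← aeval_def, RatFunc.aeval_X_left_eq_algebraMap,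
    RatFunc.aeval_X_left_eq_algebraMap, RatFunc.num_div_denom]

/-- Substitution of `g` as a `ℂ`-algebra homomorphism. For algebraic `g` the junk value `x / 0 = 0`
prevents `subst g` from being a ring homomorphism, so `g` is required to be transcendental. -/
def substAlgHom (g : RatFunc ℂ) (hg : Transcendental ℂ g) : RatFunc ℂ →ₐ[ℂ] RatFunc ℂ :=
  (IntermediateField.val _).comp (RatFunc.algEquivOfTranscendental g hg).toAlgHom

theorem substAlgHom_apply {g : RatFunc ℂ} (hg : Transcendental ℂ g) (f : RatFunc ℂ) :
    substAlgHom g hg f = subst g f :=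
  RatFunc.algEquivOfTranscendental_apply g hg f

theorem subst_injective {g : RatFunc ℂ} (hg : Transcendental ℂ g) :
    Function.Injective (subst g) :=
  funext (substAlgHom_apply hg) ▸ (substAlgHom g hg).injective

theorem algHom_subst (φ : RatFunc ℂ →ₐ[ℂ] RatFunc ℂ) (g f : RatFunc ℂ) :
    φ (subst g f) = subst (φ g) f := by
  simp only [subst, RatFunc.eval, map_div₀, ← aeval_def, aeval_algHom_apply]

theorem subst_subst {g : RatFunc ℂ} (hg : Transcendental ℂ g) (h f : RatFunc ℂ) :
    subst g (subst h f) = subst (subst g h) f := by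
  simpa only [substAlgHom_apply] using algHom_subst (substAlgHom g hg) h f

section Entrywise

variable {a b : Type*}

theorem conjT_substMat (g : RatFunc ℂ) (R : Matrix a b (RatFunc ℂ)) :
    conjT (substMat g R) = substMat (conjRF g) (conjT R) :=
  Matrix.ext fun i j => conjRF_subst g (R j i)

theorem substMat_substMat {g : RatFunc ℂ} (hg : Transcendental ℂ g) (h : RatFunc ℂ)
    (R : Matrix a b (RatFunc ℂ)) : substMat g (substMat h R) = substMat (subst g h) R :=
  Matrix.ext fun i j => subst_subst hg h (R i j)

theorem substMat_zz (R : Matrix a b (RatFunc ℂ)) : substMat zz R = R :=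
  Matrix.ext fun i j => subst_zz_left (R i j)

theorem substMat_injective {g : RatFunc ℂ} (hg : Transcendental ℂ g) :
    Function.Injective (substMat g : Matrix a b (RatFunc ℂ) → Matrix a b (RatFunc ℂ)) :=
  fun _ _ h => Matrix.ext fun i j => subst_injective hg (congrFun₂ h i j)

end Entrywise

theorem transcendental_neg_zz : Transcendental ℂ (-zz) :=
  fun h => RatFunc.transcendental_X (neg_neg zz ▸ h.neg)

theorem subst_neg_zz_neg_zz : subst (-zz) (-zz) = zz := by
  rw [← substAlgHom_apply transcendental_neg_zz, map_neg, substAlgHom_apply,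
    subst_zz_right, neg_neg]

theorem substMat_neg_zz_involutive {a b : Type*} : Function.Involutive
    (substMat (-zz) : Matrix a b (RatFunc ℂ) → Matrix a b (RatFunc ℂ)) := fun R => by
  rw [substMat_substMat transcendental_neg_zz, subst_neg_zz_neg_zz, substMat_zz]

/-- The Cayley transform `(1 + z) / (1 - z)`, which relates the symmetries `z ↦ z⁻¹` and
`z ↦ -z`. -/
def cayley : RatFunc ℂ := (1 + zz) / (1 - zz)

theorem conjRF_cayley : conjRF cayley = cayley := by
  simp only [cayley, map_div₀, map_add, map_sub, map_one, conjRF_zz]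

theorem zz_eq_cayley_sub_one_div : zz = (cayley - 1) / (cayley + 1) := by
  have one_sub_ne_zero : 1 - zz ≠ 0 := fun h =>
    RatFunc.transcendental_X (sub_eq_zero.mp h ▸ isAlgebraic_one)
  have sub_one : cayley - 1 = 2 * zz / (1 - zz) := by
    rw [cayley]; field_simp; ring
  have add_one : cayley + 1 = 2 / (1 - zz) := by
    rw [cayley]; field_simp; ring
  rw [sub_one, add_one]
  field_simp

theorem transcendental_cayley : Transcendental ℂ cayley := fun h =>
  RatFunc.transcendental_X <| show IsAlgebraic ℂ zz by
    rw [zz_eq_cayley_sub_one_div, div_eq_mul_inv]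
    exact (h.sub isAlgebraic_one).mul (h.add isAlgebraic_one).inv

theorem subst_neg_zz_cayley : subst (-zz) cayley = cayley⁻¹ := by
  rw [← substAlgHom_apply transcendental_neg_zz]
  simp only [cayley, map_div₀, map_add, map_sub, map_one, substAlgHom_apply, subst_zz_right,
    inv_div, sub_neg_eq_add, ← sub_eq_add_neg]

theorem subst_cayley_inv_zz : subst cayley zz⁻¹ = cayley⁻¹ := by
  rw [← substAlgHom_apply transcendental_cayley, map_inv₀, substAlgHom_apply, subst_zz_right]

theorem substMat_cayley_paraConj {n : Type*} (R : Matrix n n (RatFunc ℂ)) :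
    substMat cayley (paraConj R) = substMat (-zz) (conjT (substMat cayley R)) :=
  calc substMat cayley (paraConj R)
    _ = substMat (subst cayley zz⁻¹) (conjT R) := substMat_substMat transcendental_cayley _ _
    _ = substMat (subst (-zz) cayley) (conjT R) := by
      rw [subst_cayley_inv_zz, subst_neg_zz_cayley]
    _ = substMat (-zz) (substMat cayley (conjT R)) :=
      (substMat_substMat transcendental_neg_zz _ _).symm
    _ = substMat (-zz) (conjT (substMat cayley R)) := by rw [conjT_substMat, conjRF_cayley]

theorem paraHermitian_iff_bilinear_even_general {n : Type*} (R G : Matrix n n (RatFunc ℂ))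
    (hG : G = substMat ((1 + zz) / (1 - zz)) R) :
    IsParaHermitian R ↔ conjT G = substMat (-zz) G := by
  change G = substMat cayley R at hG
  calc IsParaHermitian R
    _ ↔ substMat cayley (paraConj R) = substMat cayley R :=
      (substMat_injective transcendental_cayley).eq_iff.symm
    _ ↔ substMat (-zz) (conjT G) = G := by rw [substMat_cayley_paraConj, hG]
    _ ↔ conjT G = substMat (-zz) G := substMat_neg_zz_involutive.eq_iff

/-- `R` is para-Hermitian iff `G(s) := R((1+s)/(1-s))` is `*`-even. -/
theorem paraHermitian_iff_bilinear_even (m : ℕ)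
    (R G : Matrix (Fin m) (Fin m) (RatFunc ℂ))
    (hG : G = substMat ((1 + zz) / (1 - zz)) R) :
    IsParaHermitian R ↔ conjT G = substMat (-zz) G :=
  paraHermitian_iff_bilinear_even_general R G hG
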